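/- arXiv:2412.12003 — 2 statements merged into one kernel-verified Lean document; each statement's English description precedes it below -/
import Mathlib

section
/- Let (H_•, P_•) be a Hilbert complex of length n, and let its adjoint complex be the Hilbert complex with differentials P*_k : dom(P*_k) ⊆ H_{k+1} → H_k, whose cohomology in degree n−k is ker(P*_{k−1})/ran(P*_k). Then (H_•, P_•) is a Fredholm complex (all its cohomology spaces are finite dimensional) if and only if its adjoint complex is a Fredholm complex; and in that case, for every 0 ≤ k ≤ n, the cohomology spaces ker(P_k)/ran(P_{k−1}) and ker(P*_{k−1})/ran(P*_k) are linearly isomorphic (in particular they have the same finite dimension). -/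
open LinearMap Submodule

noncomputable section

variable {H : ℕ → Type}
  [∀ k, NormedAddCommGroup (H k)] [∀ k, InnerProductSpace ℂ (H k)]
  [∀ k, CompleteSpace (H k)]

/-- The kernel of a partially defined operator, as a submodule of the ambient space. -/
def pker {E F : Type} [NormedAddCommGroup E] [InnerProductSpace ℂ E]
    [NormedAddCommGroup F] [InnerProductSpace ℂ F] (T : E →ₗ.[ℂ] F) : Submodule ℂ E :=
  (LinearMap.ker T.toFun).map T.domain.subtype

/-- The range of a partially defined operator. -/
def pran {E F : Type} [NormedAddCommGroup E] [InnerProductSpace ℂ E]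
    [NormedAddCommGroup F] [InnerProductSpace ℂ F] (T : E →ₗ.[ℂ] F) : Submodule ℂ F :=
  LinearMap.range T.toFun

/-- `ran(P_{k−1})`, with the convention `P_{−1} = 0`. -/
def prevRange (P : ∀ k, H k →ₗ.[ℂ] H (k + 1)) : ∀ k, Submodule ℂ (H k)
  | 0 => ⊥
  | (k + 1) => pran (P k)

/-- `ker(P*_{k−1})`, with the convention `P_{−1} = 0` (so that it is everything in degree 0). -/
def prevKerAdj (P : ∀ k, H k →ₗ.[ℂ] H (k + 1)) : ∀ k, Submodule ℂ (H k)
  | 0 => ⊤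
  | (k + 1) => pker ((P k).adjoint)

/-- The harmonic space `Ĥ^k = ker(P_k) ∩ ker(P*_{k−1})`. -/
abbrev harmonicSp (P : ∀ k, H k →ₗ.[ℂ] H (k + 1)) (k : ℕ) : Submodule ℂ (H k) :=
  pker (P k) ⊓ prevKerAdj P k


/-- The cohomology of the complex `H^k = ker(P_k)/ran(P_{k−1})`. -/
abbrev cohomQuot (P : ∀ k, H k →ₗ.[ℂ] H (k + 1)) (k : ℕ) :=
  ↥(pker (P k)) ⧸ (prevRange P k).comap (pker (P k)).subtype

/-- The cohomology of the adjoint complex in degree `n−k`, located at `H_k`: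
`ker(P*_{k−1})/ran(P*_k)`. -/
abbrev adjCohomQuot (P : ∀ k, H k →ₗ.[ℂ] H (k + 1)) (k : ℕ) :=
  ↥(prevKerAdj P k) ⧸ (pran ((P k).adjoint)).comap (prevKerAdj P k).subtype

/-!
Taking orthogonal complements exchanges kernels and ranges of adjoint operators:
`ker P*_{k-1} = ran(P_{k-1})ᗮ` and `ker P_k = ran(P*_k)ᗮ`. Hence, once the ranges involved are
closed, `ker(P_k)/ran(P_{k-1})` and `ker(P*_{k-1})/ran(P*_k)` are both represented by the harmonic
space `ker P_k ∩ ker P*_{k-1}`. Finite-dimensional cohomology forces closed ranges, because a range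
of finite codimension in a closed subspace is closed (a consequence of the open mapping theorem),
and the closed range theorem carries closedness over from an operator to its adjoint and back. The
closed range theorem is proved for closed linear relations `g ⊆ E × F`, for which `g** = g` makes
the two directions a single argument.
-/

section BanachSpace

variable {𝕜 E F G : Type*} [NontriviallyNormedField 𝕜]
  [NormedAddCommGroup E] [NormedSpace 𝕜 E] [CompleteSpace E]
  [NormedAddCommGroup F] [NormedSpace 𝕜 F] [CompleteSpace F]

theorem exists_comp_eq_of_surjective_of_ker_le_ker [AddCommGroup G] [Module 𝕜 G]
    [TopologicalSpace G] {f : E →L[𝕜] F} {φ : E →L[𝕜] G} (hf : Function.Surjective f)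
    (hker : f.ker ≤ φ.ker) : ∃ ψ : F →L[𝕜] G, ψ.comp f = φ := by
  have : IsClosed (f.ker : Set E) := f.isClosed_ker
  have hinj : (f.ker.liftQL f le_rfl).ker = ⊥ := f.toLinearMap.ker.ker_liftQ_eq_bot _ _ le_rfl
  have hsurj : (f.ker.liftQL f le_rfl).range = ⊤ :=
    (f.ker.range_liftQ _ _).trans (LinearMap.range_eq_top.2 hf)
  let e := ContinuousLinearEquiv.ofBijective (f.ker.liftQL f le_rfl) hinj hsurj
  refine ⟨(f.ker.liftQL φ hker).comp e.symm.toContinuousLinearMap, ?_⟩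
  ext x
  have he : e.symm (f x) = f.ker.mkQ x := e.symm_apply_apply (f.ker.mkQ x)
  simp [he]

theorem isClosed_range_of_finiteDimensional_quotient [CompleteSpace 𝕜] (f : E →L[𝕜] F)
    [FiniteDimensional 𝕜 (F ⧸ f.range)] : IsClosed (f.range : Set F) := by
  have : IsClosed (f.ker : Set E) := f.isClosed_ker
  obtain ⟨G, hG⟩ := f.range.exists_isCompl
  have : FiniteDimensional 𝕜 G := (f.range.quotientEquivOfIsCompl G hG).finiteDimensional
  have hrange : (f.ker.liftQL f le_rfl).range = f.range := f.ker.range_liftQ _ _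
  rw [← hrange]
  exact ContinuousLinearMap.closed_complemented_range_of_isCompl_of_ker_eq_bot _ G
    (hrange ▸ hG) G.closed_of_finiteDimensional (f.toLinearMap.ker.ker_liftQ_eq_bot _ _ le_rfl)

omit [CompleteSpace F] in
theorem isClosed_range_of_finiteDimensional_quotient_of_le [CompleteSpace 𝕜] (f : E →L[𝕜] F)
    {N : Submodule 𝕜 F} [CompleteSpace N] (hle : f.range ≤ N)
    [FiniteDimensional 𝕜 (N ⧸ f.range.comap N.subtype)] : IsClosed (f.range : Set F) := by
  let f' : E →L[𝕜] N := f.codRestrict N fun x => hle ⟨x, rfl⟩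
  have hf' : f'.range = f.range.comap N.subtype := LinearMap.range_codRestrict _ _ _
  have : FiniteDimensional 𝕜 (N ⧸ f'.range) := by rwa [hf']
  have hmap : f.range = f'.range.map N.subtype := by
    rw [hf', Submodule.map_comap_subtype, inf_eq_right.2 hle]
  rw [hmap]
  have hN : IsClosed (N : Set F) :=
    (completeSpace_coe_iff_isComplete.1 inferInstance : IsComplete (N : Set F)).isClosed
  exact hN.isClosedMap_subtype_val _ (isClosed_range_of_finiteDimensional_quotient f')

end BanachSpace

section LinearRelation

variable {𝕜 E F : Type*} [RCLike 𝕜]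
  [NormedAddCommGroup E] [InnerProductSpace 𝕜 E]
  [NormedAddCommGroup F] [InnerProductSpace 𝕜 F]

/-- The kernel of a linear relation, a subspace of `E × F` seen as the graph of a multivalued
operator. For relations, unlike for operators, the adjoint always exists. -/
def relKer (g : Submodule 𝕜 (E × F)) : Submodule 𝕜 E :=
  g.comap (LinearMap.inl 𝕜 E F)

/-- The range of a linear relation. -/
def relRange (g : Submodule 𝕜 (E × F)) : Submodule 𝕜 F :=
  g.map (LinearMap.snd 𝕜 E F)

variable {g : Submodule 𝕜 (E × F)}

theorem mem_relKer {x : E} : x ∈ relKer g ↔ (x, 0) ∈ g :=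
  Iff.rfl

theorem mem_relRange {y : F} : y ∈ relRange g ↔ ∃ x, (x, y) ∈ g := by
  simp [relRange]

theorem relKer_adjoint : relKer g.adjoint = (relRange g)ᗮ := by
  ext y
  simp only [mem_relKer, mem_adjoint_iff, mem_orthogonal, mem_relRange, inner_zero_right, sub_zero]
  exact ⟨fun h v ⟨u, huv⟩ => h u v huv, fun h u v huv => h v ⟨u, huv⟩⟩

theorem isClosed_adjoint : IsClosed (g.adjoint : Set (F × E)) := by
  have : (g.adjoint : Set (F × E)) =
      ⋂ p ∈ g, {x : F × E | inner 𝕜 p.2 x.1 - inner 𝕜 p.1 x.2 = 0} := by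
    ext x; simp
  rw [this]
  exact isClosed_biInter fun p _ => isClosed_eq (by fun_prop) continuous_const

/-- `E × F` carries the sup norm, so orthogonality in the product is expressed in
`WithLp 2 (E × F)`. -/
theorem mem_adjoint_iff_mem_orthogonal {x : F × E} :
    x ∈ g.adjoint ↔
      WithLp.toLp 2 (-x.2, x.1) ∈ (g.comap (WithLp.linearEquiv 2 𝕜 (E × F)).toLinearMap)ᗮ := by
  rw [mem_adjoint_iff, mem_orthogonal, (WithLp.equiv 2 (E × F)).forall_congr_left, Prod.forall]
  refine forall₃_congr fun u v _ => ?_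
  simp only [WithLp.equiv_symm_apply, WithLp.prod_inner_apply, inner_neg_right]
  rw [sub_eq_neg_add]

theorem adjoint_adjoint_of_isClosed [CompleteSpace E] [CompleteSpace F]
    (hg : IsClosed (g : Set (E × F))) : g.adjoint.adjoint = g := by
  let G : Submodule 𝕜 (WithLp 2 (E × F)) := g.comap (WithLp.linearEquiv 2 𝕜 (E × F)).toLinearMap
  have hG : IsClosed (G : Set (WithLp 2 (E × F))) :=
    hg.preimage (WithLp.prod_continuous_ofLp _ _ _)
  have : CompleteSpace G := hG.completeSpace_coe
  ext x
  calc x ∈ g.adjoint.adjoint ↔ WithLp.toLp 2 x ∈ Gᗮᗮ := by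
        rw [mem_adjoint_iff, mem_orthogonal, (WithLp.equiv 2 (E × F)).forall_congr_left,
          Prod.forall, forall_comm, (Equiv.neg E).forall_congr_left]
        refine forall₂_congr fun u v => ?_
        simp [G, mem_adjoint_iff_mem_orthogonal, -mem_adjoint_iff, WithLp.prod_inner_apply,
          sub_eq_add_neg, add_eq_zero_iff_eq_neg', neg_eq_iff_eq_neg]
    _ ↔ x ∈ g := by rw [orthogonal_orthogonal]; rfl

theorem relKer_eq_orthogonal_relRange_adjoint [CompleteSpace E] [CompleteSpace F]
    (hg : IsClosed (g : Set (E × F))) : relKer g = (relRange g.adjoint)ᗮ := by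
  rw [← relKer_adjoint, adjoint_adjoint_of_isClosed hg]

theorem relRange_adjoint_le_orthogonal_relKer : relRange g.adjoint ≤ (relKer g)ᗮ := by
  intro y hy
  obtain ⟨w, hw⟩ := mem_relRange.1 hy
  intro u hu
  simpa using (mem_adjoint_iff _ _).1 hw u 0 hu

/-- For `y ⊥ relKer g` the functional `v ↦ ⟪y, u⟫`, where `(u, v) ∈ g`, is well defined on
`relRange g`, and bounded by the open mapping theorem; its Riesz representative `w` satisfies
`(w, y) ∈ g.adjoint`. -/
theorem relRange_adjoint_eq_orthogonal_relKer [CompleteSpace E] [CompleteSpace F]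
    (hg : IsClosed (g : Set (E × F))) (hr : IsClosed (relRange g : Set F)) :
    relRange g.adjoint = (relKer g)ᗮ := by
  have : CompleteSpace g := hg.completeSpace_coe
  have : CompleteSpace (relRange g) := hr.completeSpace_coe
  refine le_antisymm relRange_adjoint_le_orthogonal_relKer fun y hy => ?_
  let f : g →L[𝕜] relRange g :=
    ((ContinuousLinearMap.snd 𝕜 E F).comp g.subtypeL).codRestrict _
      fun p => mem_relRange.2 ⟨p.1.1, p.2⟩
  have hf : Function.Surjective f := by
    rintro ⟨v, hv⟩
    obtain ⟨u, hu⟩ := mem_relRange.1 hv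
    exact ⟨⟨(u, v), hu⟩, rfl⟩
  let φ : g →L[𝕜] 𝕜 := (innerSL 𝕜 y).comp ((ContinuousLinearMap.fst 𝕜 E F).comp g.subtypeL)
  have hker : f.ker ≤ φ.ker := by
    rintro ⟨⟨u, v⟩, huv⟩ hp
    obtain rfl : v = 0 := congrArg Subtype.val hp
    exact inner_left_of_mem_orthogonal (mem_relKer.2 huv) hy
  obtain ⟨ψ, hψ⟩ := exists_comp_eq_of_surjective_of_ker_le_ker hf hker
  let w : relRange g := (InnerProductSpace.toDual 𝕜 (relRange g)).symm ψ
  have hw : ∀ p : g, inner 𝕜 (w : F) p.1.2 = inner 𝕜 y p.1.1 := fun p =>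
    (InnerProductSpace.toDual_symm_apply (y := ψ) (x := f p)).trans (DFunLike.congr_fun hψ p)
  refine mem_relRange.2 ⟨w, (mem_adjoint_iff _ _).2 fun u v huv => ?_⟩
  rw [← inner_conj_symm, hw ⟨(u, v), huv⟩, inner_conj_symm, sub_self]

theorem isClosed_relRange_adjoint [CompleteSpace E] [CompleteSpace F]
    (hg : IsClosed (g : Set (E × F))) (hr : IsClosed (relRange g : Set F)) :
    IsClosed (relRange g.adjoint : Set E) :=
  relRange_adjoint_eq_orthogonal_relKer hg hr ▸ isClosed_orthogonal _

theorem isClosed_relRange_adjoint_iff [CompleteSpace E] [CompleteSpace F]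
    (hg : IsClosed (g : Set (E × F))) :
    IsClosed (relRange g.adjoint : Set E) ↔ IsClosed (relRange g : Set F) :=
  ⟨fun h => adjoint_adjoint_of_isClosed hg ▸ isClosed_relRange_adjoint isClosed_adjoint h,
    isClosed_relRange_adjoint hg⟩

theorem isClosed_relRange_of_finiteDimensional_quotient [CompleteSpace E] [CompleteSpace F]
    (hg : IsClosed (g : Set (E × F))) {N : Submodule 𝕜 F} (hN : IsClosed (N : Set F))
    (hle : relRange g ≤ N) (hfin : FiniteDimensional 𝕜 (N ⧸ (relRange g).comap N.subtype)) :
    IsClosed (relRange g : Set F) := by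
  have : CompleteSpace g := hg.completeSpace_coe
  have : CompleteSpace N := hN.completeSpace_coe
  let f : g →L[𝕜] F := (ContinuousLinearMap.snd 𝕜 E F).comp g.subtypeL
  have hf : relRange g = f.range := (LinearMap.range_domRestrict g (LinearMap.snd 𝕜 E F)).symm
  rw [hf] at hle hfin ⊢
  exact isClosed_range_of_finiteDimensional_quotient_of_le f hle

end LinearRelation

/-- The quotient of `N` by a complete subspace `M ≤ N` is represented by the vectors of `N`
orthogonal to `M`. -/
def quotientEquivInfOrthogonal {𝕜 E : Type*} [RCLike 𝕜] [NormedAddCommGroup E]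
    [InnerProductSpace 𝕜 E] {M N : Submodule 𝕜 E} [M.HasOrthogonalProjection] (hle : M ≤ N) :
    (N ⧸ M.comap N.subtype) ≃ₗ[𝕜] ↥(N ⊓ Mᗮ) :=
  quotientEquivOfIsCompl _ _ (isCompl_comap_subtype_of_isCompl_of_le M.isCompl_orthogonal hle) ≪≫ₗ
    equivSubtypeMap N (Mᗮ.comap N.subtype) ≪≫ₗ LinearEquiv.ofEq _ _ (map_comap_subtype N Mᗮ)

section PartialOperator

variable {E F : Type} [NormedAddCommGroup E] [InnerProductSpace ℂ E]
  [NormedAddCommGroup F] [InnerProductSpace ℂ F] {T : E →ₗ.[ℂ] F}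

theorem pker_eq_relKer_graph : pker T = relKer T.graph := by
  ext x
  simp [pker, mem_relKer, T.mem_graph_iff]

theorem pran_eq_relRange_graph : pran T = relRange T.graph :=
  T.graph_map_snd_eq_range.symm

theorem pran_zero : pran (0 : E →ₗ.[ℂ] F) = ⊥ :=
  LinearMap.range_zero

theorem pran_le_pker_of_comp_eq_zero {G : Type} [NormedAddCommGroup G] [InnerProductSpace ℂ G]
    {S : F →ₗ.[ℂ] G} (hdom : ∀ x, T x ∈ S.domain) (hcomp : ∀ x, S ⟨T x, hdom x⟩ = 0) :
    pran T ≤ pker S := by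
  rintro _ ⟨x, rfl⟩
  exact ⟨⟨T x, hdom x⟩, hcomp x, rfl⟩

theorem pker_adjoint [CompleteSpace E] (hT : Dense (T.domain : Set E)) :
    pker T.adjoint = (pran T)ᗮ := by
  rw [pker_eq_relKer_graph, pran_eq_relRange_graph, LinearPMap.adjoint_graph_eq_graph_adjoint hT,
    relKer_adjoint]

variable [CompleteSpace E] [CompleteSpace F]

theorem pker_eq_orthogonal_pran_adjoint (hT : Dense (T.domain : Set E)) (hc : T.IsClosed) :
    pker T = (pran T.adjoint)ᗮ := by
  rw [pker_eq_relKer_graph, pran_eq_relRange_graph, LinearPMap.adjoint_graph_eq_graph_adjoint hT,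
    relKer_eq_orthogonal_relRange_adjoint hc]

theorem isClosed_pran_adjoint_iff (hT : Dense (T.domain : Set E)) (hc : T.IsClosed) :
    IsClosed (pran T.adjoint : Set E) ↔ IsClosed (pran T : Set F) := by
  rw [pran_eq_relRange_graph, pran_eq_relRange_graph, LinearPMap.adjoint_graph_eq_graph_adjoint hT,
    isClosed_relRange_adjoint_iff hc]

theorem isClosed_pran_of_finiteDimensional_quotient (hc : T.IsClosed) {N : Submodule ℂ F}
    (hN : IsClosed (N : Set F)) (hle : pran T ≤ N)
    (hfin : FiniteDimensional ℂ (N ⧸ (pran T).comap N.subtype)) : IsClosed (pran T : Set F) := by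
  rw [pran_eq_relRange_graph] at hle hfin ⊢
  exact isClosed_relRange_of_finiteDimensional_quotient hc hN hle hfin

end PartialOperator

omit [∀ k, CompleteSpace (H k)] in
theorem isClosed_prevRange {P : ∀ k, H k →ₗ.[ℂ] H (k + 1)} :
    ∀ {k}, (∀ j < k, IsClosed (pran (P j) : Set (H (j + 1)))) →
      IsClosed (prevRange P k : Set (H k))
  | 0, _ => isClosed_singleton
  | k + 1, h => h k k.lt_succ_self

/-- A Hilbert complex, possibly of infinite length: densely defined closed operators
`P k : H k → H (k + 1)` with `P (k + 1) ∘ P k = 0`. As `pker (P (k + 1))` lies in the domain of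
`P (k + 1)`, the last field includes `ran (P k) ⊆ dom (P (k + 1))`. -/
structure IsHilbertComplex (P : ∀ k, H k →ₗ.[ℂ] H (k + 1)) : Prop where
  dense_domain (k : ℕ) : Dense ((P k).domain : Set (H k))
  isClosed (k : ℕ) : (P k).IsClosed
  pran_le_pker (k : ℕ) : pran (P k) ≤ pker (P (k + 1))

namespace IsHilbertComplex

variable {P : ∀ k, H k →ₗ.[ℂ] H (k + 1)} (hP : IsHilbertComplex P)

include hP

omit [∀ k, CompleteSpace (H k)] in
theorem prevRange_le_pker : ∀ k, prevRange P k ≤ pker (P k)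
  | 0 => bot_le
  | k + 1 => hP.pran_le_pker k

theorem prevKerAdj_eq : ∀ k, prevKerAdj P k = (prevRange P k)ᗮ
  | 0 => bot_orthogonal_eq_top.symm
  | k + 1 => pker_adjoint (hP.dense_domain k)

theorem pker_eq (k : ℕ) : pker (P k) = (pran (P k).adjoint)ᗮ :=
  pker_eq_orthogonal_pran_adjoint (hP.dense_domain k) (hP.isClosed k)

theorem pran_adjoint_le_prevKerAdj (k : ℕ) : pran (P k).adjoint ≤ prevKerAdj P k := by
  rw [hP.prevKerAdj_eq]
  refine (le_orthogonal_orthogonal _).trans (orthogonal_le ?_)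
  rw [← hP.pker_eq]
  exact hP.prevRange_le_pker k

theorem isClosed_pker (k : ℕ) : IsClosed (pker (P k) : Set (H k)) :=
  hP.pker_eq k ▸ isClosed_orthogonal _

theorem isClosed_prevKerAdj (k : ℕ) : IsClosed (prevKerAdj P k : Set (H k)) :=
  hP.prevKerAdj_eq k ▸ isClosed_orthogonal _

theorem isClosed_pran_of_finiteDimensional_cohomQuot (k : ℕ)
    (h : FiniteDimensional ℂ (cohomQuot P (k + 1))) : IsClosed (pran (P k) : Set (H (k + 1))) :=
  isClosed_pran_of_finiteDimensional_quotient (hP.isClosed k) (hP.isClosed_pker (k + 1))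
    (hP.pran_le_pker k) h

theorem isClosed_pran_of_finiteDimensional_adjCohomQuot (k : ℕ)
    (h : FiniteDimensional ℂ (adjCohomQuot P k)) : IsClosed (pran (P k) : Set (H (k + 1))) :=
  (isClosed_pran_adjoint_iff (hP.dense_domain k) (hP.isClosed k)).1 <|
    isClosed_pran_of_finiteDimensional_quotient (LinearPMap.adjoint_isClosed (hP.dense_domain k))
      (hP.isClosed_prevKerAdj k) (hP.pran_adjoint_le_prevKerAdj k) h

theorem nonempty_cohomQuot_equiv_harmonicSp {k : ℕ} (hr : IsClosed (prevRange P k : Set (H k))) :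
    Nonempty (cohomQuot P k ≃ₗ[ℂ] harmonicSp P k) := by
  have : CompleteSpace (prevRange P k) := hr.completeSpace_coe
  rw [harmonicSp, hP.prevKerAdj_eq]
  exact ⟨quotientEquivInfOrthogonal (hP.prevRange_le_pker k)⟩

theorem nonempty_adjCohomQuot_equiv_harmonicSp {k : ℕ}
    (hr : IsClosed (pran (P k) : Set (H (k + 1)))) :
    Nonempty (adjCohomQuot P k ≃ₗ[ℂ] harmonicSp P k) := by
  have : CompleteSpace (pran (P k).adjoint) :=
    ((isClosed_pran_adjoint_iff (hP.dense_domain k) (hP.isClosed k)).2 hr).completeSpace_coe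
  rw [harmonicSp, hP.pker_eq, inf_comm]
  exact ⟨quotientEquivInfOrthogonal (hP.pran_adjoint_le_prevKerAdj k)⟩

theorem nonempty_cohomQuot_equiv_adjCohomQuot {k : ℕ}
    (hr : ∀ j ≤ k, IsClosed (pran (P j) : Set (H (j + 1)))) :
    Nonempty (cohomQuot P k ≃ₗ[ℂ] adjCohomQuot P k) := by
  obtain ⟨e⟩ := hP.nonempty_cohomQuot_equiv_harmonicSp (isClosed_prevRange fun j hj => hr j hj.le)
  obtain ⟨e'⟩ := hP.nonempty_adjCohomQuot_equiv_harmonicSp (hr k le_rfl)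
  exact ⟨e.trans e'.symm⟩

end IsHilbertComplex

theorem fredholm_iff_adjoint_fredholm_and_cohomology_iso_general (n : ℕ)
    (P : ∀ k, H k →ₗ.[ℂ] H (k + 1)) (hP : IsHilbertComplex P)
    (hran : IsClosed (pran (P n) : Set (H (n + 1)))) :
    ((∀ k ≤ n, FiniteDimensional ℂ (cohomQuot P k)) ↔
      (∀ k ≤ n, FiniteDimensional ℂ (adjCohomQuot P k))) ∧
    ((∀ k ≤ n, FiniteDimensional ℂ (cohomQuot P k)) →
      ∀ k ≤ n, Nonempty (cohomQuot P k ≃ₗ[ℂ] adjCohomQuot P k)) := by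
  have iso_of_isClosed_pran (hr : ∀ k ≤ n, IsClosed (pran (P k) : Set (H (k + 1)))) :
      ∀ k ≤ n, Nonempty (cohomQuot P k ≃ₗ[ℂ] adjCohomQuot P k) := fun k hk =>
    hP.nonempty_cohomQuot_equiv_adjCohomQuot fun j hj => hr j (hj.trans hk)
  have iso_of_cohom (h : ∀ k ≤ n, FiniteDimensional ℂ (cohomQuot P k)) :=
    iso_of_isClosed_pran fun k hk => hk.eq_or_lt.elim (fun hkn => hkn ▸ hran) fun hlt =>
      hP.isClosed_pran_of_finiteDimensional_cohomQuot k (h (k + 1) hlt)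
  have iso_of_adjCohom (h : ∀ k ≤ n, FiniteDimensional ℂ (adjCohomQuot P k)) :=
    iso_of_isClosed_pran fun k hk =>
      hP.isClosed_pran_of_finiteDimensional_adjCohomQuot k (h k hk)
  refine ⟨⟨fun h k hk => ?_, fun h k hk => ?_⟩, iso_of_cohom⟩
  · have := h k hk
    exact (iso_of_cohom h k hk).some.finiteDimensional
  · have := h k hk
    exact (iso_of_adjCohom h k hk).some.symm.finiteDimensional

/-- a Hilbert complex `(H, P)` of length `n` is Fredholm iff its adjoint complex
is Fredholm, in which case the respective cohomologies `ker(P_k)/ran(P_{k−1})` and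
`ker(P*_{k−1})/ran(P*_k)` are linearly isomorphic in every degree. -/
theorem fredholm_iff_adjoint_fredholm_and_cohomology_iso
    (n : ℕ) (P : ∀ k, H k →ₗ.[ℂ] H (k + 1))
    (hdense : ∀ k, Dense ((P k).domain : Set (H k)))
    (hclosed : ∀ k, (P k).IsClosed)
    (hsub : ∀ k, ∀ x : (P k).domain, ((P k) x) ∈ (P (k + 1)).domain)
    (hcomp : ∀ k, ∀ x : (P k).domain, P (k + 1) ⟨P k x, hsub k x⟩ = 0)
    (htop : ∀ k, n ≤ k → P k = 0) :
    ((∀ k ≤ n, FiniteDimensional ℂ (cohomQuot P k)) ↔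
      (∀ k ≤ n, FiniteDimensional ℂ (adjCohomQuot P k))) ∧
    ((∀ k ≤ n, FiniteDimensional ℂ (cohomQuot P k)) →
      ∀ k ≤ n, Nonempty (cohomQuot P k ≃ₗ[ℂ] adjCohomQuot P k)) := by
  exact fredholm_iff_adjoint_fredholm_and_cohomology_iso_general n P
    ⟨hdense, hclosed, fun k => pran_le_pker_of_comp_eq_zero (hsub k) (hcomp k)⟩
    (by rw [htop n le_rfl, pran_zero]; exact isClosed_singleton)
end
end

section
/- (Abstract instanton subcomplex) Let (H_•, P_•) be a Fredholm Hilbert complex of length n, with harmonic spaces Ĥ^k := ker(P_k) ∩ ker(P*_{k−1}). Suppose K_0, …, K_n are finite-dimensional subspaces with K_k ⊆ dom(P_k) ∩ dom(P*_{k−1}) such that P_k(K_k) ⊆ K_{k+1}, P*_k(K_{k+1}) ⊆ K_k, and Ĥ^k ⊆ K_k for every k. Then (K_•, P_•|_{K_•}) is a complex of finite-dimensional spaces, and for every k the inclusion K_k ↪ H_k induces a linear isomorphism from ker(P_k|_{K_k})/ran(P_{k−1}|_{K_{k−1}}) onto the cohomology H^k = ker(P_k)/ran(P_{k−1}). -/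
/-!
Since `P_{k-1}` is closed with range of finite codimension in the closed subspace `ker P_k`, this
range is closed, and orthogonal projection gives the Hodge decomposition
`ker P_k = ran P_{k-1} ⊕ Ĥ^k`. As `Ĥ^k ⊆ K_k`, every cohomology class has a representative in `K_k`.

For injectivity, `K_{k+1} ∩ ran P_k = P_k(K_k)`: let `z` lie in the left-hand side and be orthogonal
to `P_k(K_k)`. Then `P_k* z ∈ K_k`, so `‖P_k* z‖² = ⟨z, P_k P_k* z⟩ = 0`, and a vector of
`ker P_k* ∩ ran P_k` vanishes. Hence `P_k(K_k)` has trivial orthogonal complement in the left-hand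
side, and being closed it is everything.
-/

open LinearMap Submodule

noncomputable section

variable {H : ℕ → Type}
  [∀ k, NormedAddCommGroup (H k)] [∀ k, InnerProductSpace ℂ (H k)]
  [∀ k, CompleteSpace (H k)]

/-- `dom(P*_{k−1})`, with the convention `P_{−1} = 0` (so that it is everything in degree 0). -/
def prevAdjDom (P : ∀ k, H k →ₗ.[ℂ] H (k + 1)) : ∀ k, Submodule ℂ (H k)
  | 0 => ⊤
  | (k + 1) => ((P k).adjoint).domain

/-- The map on quotients induced by a linear map respecting the given submodules. -/
noncomputable def inducedQuotMap {M N : Type} [AddCommGroup M] [Module ℂ M]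
    [AddCommGroup N] [Module ℂ N] (f : M →ₗ[ℂ] N)
    (pk pr : Submodule ℂ M) (qk qr : Submodule ℂ N)
    (h1 : ∀ x ∈ pk, f x ∈ qk) (h2 : ∀ x ∈ pr, f x ∈ qr) :
    (↥pk ⧸ pr.comap pk.subtype) →ₗ[ℂ] (↥qk ⧸ qr.comap qk.subtype) :=
  Submodule.mapQ _ _
    (LinearMap.codRestrict qk (f.comp pk.subtype) (fun x => h1 x.1 x.2))
    (by intro x hx; exact h2 x.1 hx)

/-- The restriction of the differential `P_k` to the finite-dimensional subspaces `K_k`. -/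
noncomputable def dKmap (P : ∀ k, H k →ₗ.[ℂ] H (k + 1)) (K : ∀ k, Submodule ℂ (H k))
    (hK1 : ∀ k, K k ≤ (P k).domain)
    (hPK : ∀ k, ∀ x, ∀ hx : x ∈ K k, (P k).toFun ⟨x, hK1 k hx⟩ ∈ K (k + 1)) (k : ℕ) :
    ↥(K k) →ₗ[ℂ] ↥(K (k + 1)) :=
  LinearMap.codRestrict (K (k + 1)) ((P k).toFun ∘ₗ Submodule.inclusion (hK1 k))
    (fun x => hPK k x.1 x.2)

/-- The range of the previous restricted differential (with the convention that it is `⊥` in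
degree 0). -/
noncomputable def prevRangeK (P : ∀ k, H k →ₗ.[ℂ] H (k + 1)) (K : ∀ k, Submodule ℂ (H k))
    (hK1 : ∀ k, K k ≤ (P k).domain)
    (hPK : ∀ k, ∀ x, ∀ hx : x ∈ K k, (P k).toFun ⟨x, hK1 k hx⟩ ∈ K (k + 1)) :
    ∀ k, Submodule ℂ ↥(K k)
  | 0 => ⊥
  | (k + 1) => LinearMap.range (dKmap P K hK1 hPK k)

section ClosedRange

variable {𝕜 X Y : Type*} [NontriviallyNormedField 𝕜] [CompleteSpace 𝕜]
  [NormedAddCommGroup X] [NormedSpace 𝕜 X] [CompleteSpace X]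
  [NormedAddCommGroup Y] [NormedSpace 𝕜 Y] [CompleteSpace Y]

theorem isClosed_range_of_cofg_range (f : X →L[𝕜] Y) (hf : f.range.CoFG) :
    IsClosed (f.range : Set Y) := by
  obtain ⟨C, hC⟩ := f.range.exists_isCompl
  have : FiniteDimensional 𝕜 C := Module.Finite.iff_fg.2 (hf.fg_of_isCompl hC)
  have : IsClosed (f.ker : Set X) := f.isClosed_ker
  let g : X ⧸ f.ker →L[𝕜] Y := f.ker.liftQL f le_rfl
  have hg : g.range = f.range := f.ker.range_liftQ f.toLinearMap le_rfl
  rw [← hg]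
  exact g.closed_complemented_range_of_isCompl_of_ker_eq_bot C (hg ▸ hC)
    C.closed_of_finiteDimensional (f.ker.ker_liftQ_eq_bot' f.toLinearMap rfl)

theorem isClosed_range_of_cofg_submoduleOf (f : X →L[𝕜] Y) {Z : Submodule 𝕜 Y}
    (hZ : IsClosed (Z : Set Y)) (hfZ : f.range ≤ Z) (hf : (f.range.submoduleOf Z).CoFG) :
    IsClosed (f.range : Set Y) := by
  have : CompleteSpace Z := hZ.completeSpace_coe
  let g : X →L[𝕜] Z := f.codRestrict Z fun x => hfZ ⟨x, rfl⟩
  have hg : g.range = f.range.submoduleOf Z := LinearMap.range_codRestrict _ _ _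
  have hfg : f.range = g.range.map Z.subtype := LinearMap.range_comp g.toLinearMap Z.subtype
  rw [hfg]
  exact hZ.isClosedEmbedding_subtypeVal.isClosedMap _ (isClosed_range_of_cofg_range g (hg ▸ hf))

theorem isClosed_range_toFun_of_cofg_submoduleOf {T : X →ₗ.[𝕜] Y}
    (hT : T.IsClosed) {Z : Submodule 𝕜 Y} (hZ : IsClosed (Z : Set Y)) (hTZ : range T.toFun ≤ Z)
    (hcofg : ((range T.toFun).submoduleOf Z).CoFG) : IsClosed (range T.toFun : Set Y) := by
  have : CompleteSpace T.graph := IsClosed.completeSpace_coe (hs := hT)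
  let f : T.graph →L[𝕜] Y := (ContinuousLinearMap.snd 𝕜 X Y).comp T.graph.subtypeL
  have hf : f.range = range T.toFun := by
    rw [← T.graph_map_snd_eq_range]
    exact (LinearMap.range_comp _ _).trans (congrArg _ T.graph.range_subtype)
  rw [← hf] at hTZ hcofg ⊢
  exact isClosed_range_of_cofg_submoduleOf f hZ hTZ hcofg

end ClosedRange

theorem comap_inl_graph {R X Y : Type*} [Ring R] [AddCommGroup X] [Module R X]
    [AddCommGroup Y] [Module R Y] (T : X →ₗ.[R] Y) :
    T.graph.comap (inl R X Y) = (ker T.toFun).map T.domain.subtype := by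
  ext x
  simp [LinearPMap.mem_graph_iff]

theorem isClosed_map_subtype_ker {R X Y : Type*} [CommRing R] [AddCommGroup X] [Module R X]
    [TopologicalSpace X] [AddCommGroup Y] [Module R Y] [TopologicalSpace Y] {T : X →ₗ.[R] Y}
    (hT : T.IsClosed) : IsClosed ((ker T.toFun).map T.domain.subtype : Set X) := by
  rw [← comap_inl_graph]
  exact IsClosed.preimage (f := fun x : X => (x, (0 : Y))) (by fun_prop) hT

section Adjoint

variable {𝕜 E F : Type*} [RCLike 𝕜] [NormedAddCommGroup E] [InnerProductSpace 𝕜 E]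
  [NormedAddCommGroup F] [InnerProductSpace 𝕜 F] {T : E →ₗ.[𝕜] F} {S : F →ₗ.[𝕜] E}

theorem map_subtype_ker_le_orthogonal_range (hST : S.IsFormalAdjoint T) :
    (ker S.toFun).map S.domain.subtype ≤ (range T.toFun)ᗮ := by
  rintro _ ⟨z, hz, rfl⟩
  refine (mem_orthogonal' _ _).2 ?_
  rintro _ ⟨x, rfl⟩
  have hSz : S z = 0 := hz
  simpa [hSz] using (hST z x).symm

theorem map_subtype_ker_adjoint [CompleteSpace E] (hT : Dense (T.domain : Set E)) :
    (ker T.adjoint.toFun).map T.adjoint.domain.subtype = (range T.toFun)ᗮ := by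
  refine le_antisymm
    (map_subtype_ker_le_orthogonal_range (LinearPMap.adjoint_isFormalAdjoint hT)) fun z hz => ?_
  have hinner : ∀ x : T.domain, inner 𝕜 (0 : E) x = inner 𝕜 z (T x) := fun x =>
    (inner_zero_left _).trans (inner_left_of_mem_orthogonal (mem_range_self T.toFun x) hz).symm
  have hdom : z ∈ T.adjoint.domain := LinearPMap.mem_adjoint_domain_of_exists z ⟨0, hinner⟩
  exact ⟨⟨z, hdom⟩, LinearPMap.adjoint_apply_eq hT ⟨z, hdom⟩ hinner, rfl⟩

theorem formalAdjoint_apply_eq_zero_of_mem_orthogonal (hST : S.IsFormalAdjoint T)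
    {K : Submodule 𝕜 E} (hK : K ≤ T.domain) {z : S.domain} (hSz : S z ∈ K)
    (hz : (z : F) ∈ ((K.submoduleOf T.domain).map T.toFun)ᗮ) : S z = 0 :=
  inner_self_eq_zero.1 <| (hST z ⟨S z, hK hSz⟩).trans <|
    inner_left_of_mem_orthogonal (mem_map_of_mem hSz) hz

theorem map_submoduleOf_domain_eq_inf_range (hST : S.IsFormalAdjoint T)
    {K : Submodule 𝕜 E} {L : Submodule 𝕜 F} (hK : K ≤ T.domain) (hL : L ≤ S.domain)
    (hTK : ∀ x : T.domain, (x : E) ∈ K → T x ∈ L) (hSL : ∀ y : S.domain, (y : F) ∈ L → S y ∈ K)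
    [((K.submoduleOf T.domain).map T.toFun).HasOrthogonalProjection] :
    (K.submoduleOf T.domain).map T.toFun = L ⊓ range T.toFun := by
  set R := (K.submoduleOf T.domain).map T.toFun
  have hR : R ≤ L ⊓ range T.toFun := by
    rintro _ ⟨x, hx, rfl⟩
    exact ⟨hTK x hx, x, rfl⟩
  have hdisjoint : Rᗮ ⊓ (L ⊓ range T.toFun) = ⊥ := by
    refine eq_bot_iff.2 fun z ⟨hzR, hzL, hzT⟩ => ?_
    have hSz : S ⟨z, hL hzL⟩ = 0 :=
      formalAdjoint_apply_eq_zero_of_mem_orthogonal hST hK (hSL _ hzL) hzR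
    have hz : z ∈ (range T.toFun)ᗮ := map_subtype_ker_le_orthogonal_range hST ⟨_, hSz, rfl⟩
    exact (orthogonal_disjoint _).le_bot ⟨hzT, hz⟩
  simpa [hdisjoint] using sup_orthogonal_inf_of_hasOrthogonalProjection hR

end Adjoint

section InducedQuotMap

variable {M N : Type} [AddCommGroup M] [Module ℂ M] [AddCommGroup N] [Module ℂ N]
  {f : M →ₗ[ℂ] N} {pk pr : Submodule ℂ M} {qk qr : Submodule ℂ N}
  {h1 : ∀ x ∈ pk, f x ∈ qk} {h2 : ∀ x ∈ pr, f x ∈ qr}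

theorem inducedQuotMap_injective_iff :
    Function.Injective (inducedQuotMap f pk pr qk qr h1 h2) ↔ ∀ x ∈ pk, f x ∈ qr → x ∈ pr := by
  rw [injective_iff_map_eq_zero, (Submodule.Quotient.mk_surjective _).forall, Subtype.forall]
  refine forall₂_congr fun x hx => imp_congr ?_ ?_
  · exact Submodule.Quotient.mk_eq_zero (x := (⟨f x, h1 x hx⟩ : qk)) (qr.comap qk.subtype)
  · exact Submodule.Quotient.mk_eq_zero _

theorem inducedQuotMap_surjective_iff :
    Function.Surjective (inducedQuotMap f pk pr qk qr h1 h2) ↔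
      ∀ y ∈ qk, ∃ x ∈ pk, f x - y ∈ qr := by
  rw [Function.Surjective, (Submodule.Quotient.mk_surjective _).forall, Subtype.forall]
  refine forall₂_congr fun y hy => ?_
  rw [(Submodule.Quotient.mk_surjective _).exists, Subtype.exists]
  refine exists_congr fun x => ?_
  rw [← exists_prop]
  exact exists_congr fun hx =>
    Submodule.Quotient.eq (x := (⟨f x, h1 x hx⟩ : qk)) (y := ⟨y, hy⟩) (qr.comap qk.subtype)

end InducedQuotMap

section HilbertComplex

variable {P : ∀ k, H k →ₗ.[ℂ] H (k + 1)}

omit [∀ k, CompleteSpace (H k)] in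
theorem prevRange_le_pker (hsub : ∀ k, ∀ x : (P k).domain, ((P k) x) ∈ (P (k + 1)).domain)
    (hcomp : ∀ k, ∀ x : (P k).domain, P (k + 1) ⟨P k x, hsub k x⟩ = 0) (k : ℕ) :
    prevRange P k ≤ pker (P k) := by
  cases k with
  | zero => exact bot_le
  | succ k =>
    rintro _ ⟨x, rfl⟩
    exact ⟨⟨P k x, hsub k x⟩, hcomp k x, rfl⟩

theorem prevKerAdj_eq_orthogonal_prevRange (hdense : ∀ k, Dense ((P k).domain : Set (H k)))
    (k : ℕ) : prevKerAdj P k = (prevRange P k)ᗮ := by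
  cases k with
  | zero => exact bot_orthogonal_eq_top.symm
  | succ k => exact map_subtype_ker_adjoint (hdense k)

theorem prevRange_sup_harmonicSp (hdense : ∀ k, Dense ((P k).domain : Set (H k)))
    {k : ℕ} (hle : prevRange P k ≤ pker (P k)) (hclosed : IsClosed (prevRange P k : Set (H k))) :
    prevRange P k ⊔ harmonicSp P k = pker (P k) := by
  have : CompleteSpace (prevRange P k) := hclosed.completeSpace_coe
  rw [harmonicSp, prevKerAdj_eq_orthogonal_prevRange hdense, inf_comm]
  exact sup_orthogonal_inf_of_hasOrthogonalProjection hle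

theorem isClosed_prevRange_of_cofg (hclosed : ∀ k, (P k).IsClosed) {k : ℕ}
    (hle : prevRange P k ≤ pker (P k)) (hcofg : ((prevRange P k).submoduleOf (pker (P k))).CoFG) :
    IsClosed (prevRange P k : Set (H k)) := by
  cases k with
  | zero => exact isClosed_singleton
  | succ k =>
    exact isClosed_range_toFun_of_cofg_submoduleOf (hclosed k)
      (isClosed_map_subtype_ker (hclosed (k + 1))) hle hcofg

variable {K : ∀ k, Submodule ℂ (H k)} {hK1 : ∀ k, K k ≤ (P k).domain}
  {hPK : ∀ k, ∀ x, ∀ hx : x ∈ K k, (P k).toFun ⟨x, hK1 k hx⟩ ∈ K (k + 1)}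

omit [∀ k, CompleteSpace (H k)] in
theorem ker_dKmap (k : ℕ) : ker (dKmap P K hK1 hPK k) = (pker (P k)).submoduleOf (K k) := by
  ext x
  constructor
  · intro hx
    exact ⟨⟨x, hK1 k x.2⟩, congrArg Subtype.val hx, rfl⟩
  · rintro ⟨y, hy, hyx⟩
    obtain rfl : y = ⟨x, hK1 k x.2⟩ := Subtype.ext hyx
    exact Subtype.ext hy

theorem prevRangeK_eq_submoduleOf (hdense : ∀ k, Dense ((P k).domain : Set (H k)))
    (hK2 : ∀ k, K k ≤ prevAdjDom P k)
    (hQK : ∀ k, ∀ x, ∀ hx : x ∈ K (k + 1), (P k).adjoint.toFun ⟨x, hK2 (k + 1) hx⟩ ∈ K k)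
    (hPKclosed : ∀ k,
      IsClosed (((K k).submoduleOf (P k).domain).map (P k).toFun : Set (H (k + 1)))) (k : ℕ) :
    prevRangeK P K hK1 hPK k = (prevRange P k).submoduleOf (K k) := by
  cases k with
  | zero => exact (ker_subtype (K 0)).symm
  | succ k =>
    have : CompleteSpace (((K k).submoduleOf (P k).domain).map (P k).toFun) :=
      (hPKclosed k).completeSpace_coe
    have himage := map_submoduleOf_domain_eq_inf_range
      (LinearPMap.adjoint_isFormalAdjoint (hdense k)) (hK1 k) (hK2 (k + 1))
      (fun x hx => hPK k x hx) (fun y hy => hQK k y hy)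
    ext x
    constructor
    · rintro ⟨y, rfl⟩
      exact ⟨⟨y, hK1 k y.2⟩, rfl⟩
    · intro hx
      obtain ⟨y, hy, hyx⟩ := himage.ge ⟨x.2, hx⟩
      exact ⟨⟨y, hy⟩, Subtype.ext hyx⟩

end HilbertComplex

theorem abstract_instanton_subcomplex_general
    (P : ∀ k, H k →ₗ.[ℂ] H (k + 1))
    (hdense : ∀ k, Dense ((P k).domain : Set (H k)))
    (hsub : ∀ k, ∀ x : (P k).domain, ((P k) x) ∈ (P (k + 1)).domain)
    (hcomp : ∀ k, ∀ x : (P k).domain, P (k + 1) ⟨P k x, hsub k x⟩ = 0)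
    (hPclosed : ∀ k, IsClosed (prevRange P k : Set (H k)))
    (K : ∀ k, Submodule ℂ (H k))
    (hPKclosed : ∀ k,
      IsClosed (((K k).submoduleOf (P k).domain).map (P k).toFun : Set (H (k + 1))))
    (hK1 : ∀ k, K k ≤ (P k).domain)
    (hK2 : ∀ k, K k ≤ prevAdjDom P k)
    (hPK : ∀ k, ∀ x, ∀ hx : x ∈ K k, (P k).toFun ⟨x, hK1 k hx⟩ ∈ K (k + 1))
    (hQK : ∀ k, ∀ x, ∀ hx : x ∈ K (k + 1),
      ((P k).adjoint).toFun ⟨x, hK2 (k + 1) hx⟩ ∈ K k)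
    (hHarm : ∀ k, harmonicSp P k ≤ K k) :
    (∀ k, ∀ x : ↥(K k),
      dKmap P K hK1 hPK (k + 1) (dKmap P K hK1 hPK k x) = 0) ∧
    (∀ k,
      ∀ (h1 : ∀ x ∈ LinearMap.ker (dKmap P K hK1 hPK k), (K k).subtype x ∈ pker (P k))
        (h2 : ∀ x ∈ prevRangeK P K hK1 hPK k, (K k).subtype x ∈ prevRange P k),
      Function.Bijective
        (inducedQuotMap ((K k).subtype) (LinearMap.ker (dKmap P K hK1 hPK k))
          (prevRangeK P K hK1 hPK k) (pker (P k)) (prevRange P k) h1 h2)) := by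
  refine ⟨fun k x => Subtype.ext (hcomp k ⟨x, hK1 k x.2⟩), fun k h1 h2 =>
    ⟨inducedQuotMap_injective_iff.2 fun x _ hx => ?_,
      inducedQuotMap_surjective_iff.2 fun y hy => ?_⟩⟩
  · rwa [prevRangeK_eq_submoduleOf hdense hK2 hQK hPKclosed]
  · rw [← prevRange_sup_harmonicSp hdense (prevRange_le_pker hsub hcomp k) (hPclosed k)] at hy
    obtain ⟨r, hr, h, hh, rfl⟩ := mem_sup.1 hy
    refine ⟨⟨h, hHarm k hh⟩, (ker_dKmap k).ge hh.1, ?_⟩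
    simpa using hr

/-- Abstract instanton subcomplex: if `(H, P)` is a Fredholm Hilbert complex of
length `n` and `K_k ⊆ dom(P_k) ∩ dom(P*_{k−1})` are finite-dimensional subspaces invariant
under `P` and `P*` and containing the harmonic spaces, then `(K, P|_K)` is a complex of
finite-dimensional spaces and the inclusions `K_k ↪ H_k` induce isomorphisms
`ker(P_k|_K)/ran(P_{k−1}|_K) ≅ H^k = ker(P_k)/ran(P_{k−1})`. -/
theorem abstract_instanton_subcomplex
    (n : ℕ) (P : ∀ k, H k →ₗ.[ℂ] H (k + 1))
    (hdense : ∀ k, Dense ((P k).domain : Set (H k)))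
    (hclosed : ∀ k, (P k).IsClosed)
    (hsub : ∀ k, ∀ x : (P k).domain, ((P k) x) ∈ (P (k + 1)).domain)
    (hcomp : ∀ k, ∀ x : (P k).domain, P (k + 1) ⟨P k x, hsub k x⟩ = 0)
    (htop : ∀ k, n ≤ k → P k = 0)
    (hFred : ∀ k, FiniteDimensional ℂ
      (↥(pker (P k)) ⧸ (prevRange P k).comap (pker (P k)).subtype))
    (K : ∀ k, Submodule ℂ (H k))
    (hKfd : ∀ k, FiniteDimensional ℂ (K k))
    (hK1 : ∀ k, K k ≤ (P k).domain)
    (hK2 : ∀ k, K k ≤ prevAdjDom P k)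
    (hPK : ∀ k, ∀ x, ∀ hx : x ∈ K k, (P k).toFun ⟨x, hK1 k hx⟩ ∈ K (k + 1))
    (hQK : ∀ k, ∀ x, ∀ hx : x ∈ K (k + 1),
      ((P k).adjoint).toFun ⟨x, hK2 (k + 1) hx⟩ ∈ K k)
    (hHarm : ∀ k, harmonicSp P k ≤ K k) :
    (∀ k, ∀ x : ↥(K k),
      dKmap P K hK1 hPK (k + 1) (dKmap P K hK1 hPK k x) = 0) ∧
    (∀ k ≤ n,
      ∀ (h1 : ∀ x ∈ LinearMap.ker (dKmap P K hK1 hPK k), (K k).subtype x ∈ pker (P k))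
        (h2 : ∀ x ∈ prevRangeK P K hK1 hPK k, (K k).subtype x ∈ prevRange P k),
      Function.Bijective
        (inducedQuotMap ((K k).subtype) (LinearMap.ker (dKmap P K hK1 hPK k))
          (prevRangeK P K hK1 hPK k) (pker (P k)) (prevRange P k) h1 h2)) := by
  have hPKclosed : ∀ k,
      IsClosed (((K k).submoduleOf (P k).domain).map (P k).toFun : Set (H (k + 1))) := fun k =>
    have := (submoduleOfEquivOfLe (hK1 k)).symm.finiteDimensional
    closed_of_finiteDimensional _
  have hPclosed : ∀ k, IsClosed (prevRange P k : Set (H k)) := fun k =>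
    isClosed_prevRange_of_cofg hclosed (prevRange_le_pker hsub hcomp k) (hFred k)
  obtain ⟨hcomplex, hbijective⟩ := abstract_instanton_subcomplex_general P hdense hsub hcomp
    hPclosed K hPKclosed hK1 hK2 hPK hQK hHarm
  exact ⟨hcomplex, fun k _ => hbijective k⟩
end
end
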